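/- Let K : ℝ → ℝ be a smooth function and let ψ : ℝ³ → ℝ be a smooth solution of the rotationally invariant parameterized vorticity equation ζ_t + ψ_x ζ_y − ψ_y ζ_x = K(x² + y²)·(ζ_xx + ζ_yy), where ζ := ψ_xx + ψ_yy. Then for every ε ∈ ℝ the function ψ̃(t,x,y) := ψ(t, x cos(εt) + y sin(εt), −x sin(εt) + y cos(εt)) + (ε/2)(x² + y²) is also a smooth solution of the same equation. -/

import Mathlib

noncomputable section

/-- Partial derivative with respect to t. -/
def dT (f : ℝ × ℝ × ℝ → ℝ) (p : ℝ × ℝ × ℝ) : ℝ := fderiv ℝ f p (1, 0, 0)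
/-- Partial derivative with respect to x. -/
def dX (f : ℝ × ℝ × ℝ → ℝ) (p : ℝ × ℝ × ℝ) : ℝ := fderiv ℝ f p (0, 1, 0)
/-- Partial derivative with respect to y. -/
def dY (f : ℝ × ℝ × ℝ → ℝ) (p : ℝ × ℝ × ℝ) : ℝ := fderiv ℝ f p (0, 0, 1)

/-- The vorticity ζ := ψ_xx + ψ_yy. -/
def vort (ψ : ℝ × ℝ × ℝ → ℝ) : ℝ × ℝ × ℝ → ℝ := fun p => dX (dX ψ) p + dY (dY ψ) p

/-- ψ is a smooth solution of the rotationally invariant parameterized vorticity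
equation ζ_t + ψ_x ζ_y − ψ_y ζ_x = K(x² + y²)·(ζ_xx + ζ_yy). -/
def IsKVortSol (K : ℝ → ℝ) (ψ : ℝ × ℝ × ℝ → ℝ) : Prop :=
  ContDiff ℝ (⊤ : ℕ∞) ψ ∧ ∀ p : ℝ × ℝ × ℝ,
    dT (vort ψ) p + dX ψ p * dY (vort ψ) p - dY ψ p * dX (vort ψ) p
      = K (p.2.1 ^ 2 + p.2.2 ^ 2) * (dX (dX (vort ψ)) p + dY (dY (vort ψ)) p)

/-!
Write `R` for the passage to a frame turning with angle `θ(t)`, and `∂_φ = x∂_y - y∂_x`. The planar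
Laplacian, the Poisson bracket, the angular derivative and `x² + y²` all commute with `R`; only the
time derivative does not, `∂_t (g ∘ R) = (∂_t g - θ' ∂_φ g) ∘ R`. For `θ = εt` the defect is exactly
compensated by the solid-body term, because `{ε/2 (x² + y²), g} = ε ∂_φ g`, while the vorticity of
that term is the constant `2ε`, which every remaining derivative kills.
-/

section PartialDerivatives

variable {f g : ℝ × ℝ × ℝ → ℝ} {p : ℝ × ℝ × ℝ} {m n : WithTop ℕ∞}

lemma fderiv_apply_eq_partials (f : ℝ × ℝ × ℝ → ℝ) (p v : ℝ × ℝ × ℝ) :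
    fderiv ℝ f p v = v.1 * dT f p + v.2.1 * dX f p + v.2.2 * dY f p := by
  have hv : v = v.1 • (1, 0, 0) + v.2.1 • (0, 1, 0) + v.2.2 • (0, 0, 1) := by
    ext <;> simp
  conv_lhs => rw [hv]
  simp only [map_add, map_smul, smul_eq_mul, dT, dX, dY]

lemma hasFDerivAt_comp_time {a : ℝ → ℝ} (ha : DifferentiableAt ℝ a p.1) :
    HasFDerivAt (fun q : ℝ × ℝ × ℝ => a q.1) (deriv a p.1 • .fst ℝ ℝ (ℝ × ℝ)) p :=
  ha.hasDerivAt.comp_hasFDerivAt p hasFDerivAt_fst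

lemma hasFDerivAt_x (p : ℝ × ℝ × ℝ) : HasFDerivAt (fun q : ℝ × ℝ × ℝ => q.2.1)
    (.fst ℝ ℝ ℝ ∘L .snd ℝ ℝ (ℝ × ℝ)) p :=
  hasFDerivAt_fst.comp p hasFDerivAt_snd

lemma hasFDerivAt_y (p : ℝ × ℝ × ℝ) : HasFDerivAt (fun q : ℝ × ℝ × ℝ => q.2.2)
    (.snd ℝ ℝ ℝ ∘L .snd ℝ ℝ (ℝ × ℝ)) p :=
  hasFDerivAt_snd.comp p hasFDerivAt_snd

lemma contDiff_dX (hf : ContDiff ℝ n f) (hmn : m + 1 ≤ n) : ContDiff ℝ m (dX f) :=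
  (hf.fderiv_right hmn).clm_apply contDiff_const

lemma contDiff_dY (hf : ContDiff ℝ n f) (hmn : m + 1 ≤ n) : ContDiff ℝ m (dY f) :=
  (hf.fderiv_right hmn).clm_apply contDiff_const

lemma contDiff_vort (hf : ContDiff ℝ n f) (hmn : m + 1 + 1 ≤ n) : ContDiff ℝ m (vort f) :=
  (contDiff_dX (contDiff_dX hf hmn) le_rfl).add (contDiff_dY (contDiff_dY hf hmn) le_rfl)

lemma dX_add (hf : DifferentiableAt ℝ f p) (hg : DifferentiableAt ℝ g p) :
    dX (f + g) p = dX f p + dX g p := by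
  simp only [dX, fderiv_add hf hg, add_apply]

lemma dY_add (hf : DifferentiableAt ℝ f p) (hg : DifferentiableAt ℝ g p) :
    dY (f + g) p = dY f p + dY g p := by
  simp only [dY, fderiv_add hf hg, add_apply]

lemma differentiable_dX (hf : ContDiff ℝ 2 f) : Differentiable ℝ (dX f) :=
  (contDiff_dX hf (one_add_one_eq_two (R := WithTop ℕ∞)).le).differentiable one_ne_zero

lemma differentiable_dY (hf : ContDiff ℝ 2 f) : Differentiable ℝ (dY f) :=
  (contDiff_dY hf (one_add_one_eq_two (R := WithTop ℕ∞)).le).differentiable one_ne_zero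

lemma vort_add (hf : ContDiff ℝ 2 f) (hg : ContDiff ℝ 2 g) : vort (f + g) = vort f + vort g := by
  have hX : dX (f + g) = dX f + dX g := funext fun q =>
    dX_add (hf.differentiable two_ne_zero q) (hg.differentiable two_ne_zero q)
  have hY : dY (f + g) = dY f + dY g := funext fun q =>
    dY_add (hf.differentiable two_ne_zero q) (hg.differentiable two_ne_zero q)
  funext q
  simp only [vort, Pi.add_apply, hX, hY, dX_add (differentiable_dX hf q) (differentiable_dX hg q),
    dY_add (differentiable_dY hf q) (differentiable_dY hg q)]
  ring

lemma dT_add_const (f : ℝ × ℝ × ℝ → ℝ) (c : ℝ) : dT (fun q => f q + c) = dT f :=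
  funext fun _ => by rw [dT, fderiv_add_const, dT]

lemma dX_add_const (f : ℝ × ℝ × ℝ → ℝ) (c : ℝ) : dX (fun q => f q + c) = dX f :=
  funext fun _ => by rw [dX, fderiv_add_const, dX]

lemma dY_add_const (f : ℝ × ℝ × ℝ → ℝ) (c : ℝ) : dY (fun q => f q + c) = dY f :=
  funext fun _ => by rw [dY, fderiv_add_const, dY]

lemma vort_add_const (f : ℝ × ℝ × ℝ → ℝ) (c : ℝ) : vort (fun q => f q + c) = vort f := by
  funext q
  simp only [vort, dX_add_const, dY_add_const]

lemma fderiv_time_mul_add_time_mul_apply_spatial {a b : ℝ → ℝ} (ha : DifferentiableAt ℝ a p.1)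
    (hb : DifferentiableAt ℝ b p.1) (hf : DifferentiableAt ℝ f p) (hg : DifferentiableAt ℝ g p)
    (w : ℝ × ℝ) :
    fderiv ℝ (fun q => a q.1 * f q + b q.1 * g q) p (0, w) =
      a p.1 * fderiv ℝ f p (0, w) + b p.1 * fderiv ℝ g p (0, w) := by
  have h : HasFDerivAt (fun q => a q.1 * f q + b q.1 * g q) _ p :=
    ((hasFDerivAt_comp_time ha).mul hf.hasFDerivAt).add
      ((hasFDerivAt_comp_time hb).mul hg.hasFDerivAt)
  rw [h.fderiv]
  simp

end PartialDerivatives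

section PoissonBracket

variable {f g k : ℝ × ℝ × ℝ → ℝ} {p : ℝ × ℝ × ℝ}

/-- The Poisson bracket `{f, g} = f_x g_y - f_y g_x`. -/
def poissonBracket (f g : ℝ × ℝ × ℝ → ℝ) (p : ℝ × ℝ × ℝ) : ℝ :=
  dX f p * dY g p - dY f p * dX g p

/-- The angular derivative `x ∂_y - y ∂_x`, the infinitesimal generator of spatial rotations. -/
def angularDeriv (f : ℝ × ℝ × ℝ → ℝ) (p : ℝ × ℝ × ℝ) : ℝ :=
  p.2.1 * dY f p - p.2.2 * dX f p

lemma poissonBracket_add_left (hf : DifferentiableAt ℝ f p) (hg : DifferentiableAt ℝ g p) :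
    poissonBracket (f + g) k p = poissonBracket f k p + poissonBracket g k p := by
  simp only [poissonBracket, dX_add hf hg, dY_add hf hg]
  ring

lemma poissonBracket_add_const_right (f g : ℝ × ℝ × ℝ → ℝ) (c : ℝ) :
    poissonBracket f (fun q => g q + c) = poissonBracket f g := by
  funext q
  simp only [poissonBracket, dX_add_const, dY_add_const]

lemma isKVortSol_iff {K : ℝ → ℝ} :
    IsKVortSol K f ↔ ContDiff ℝ (⊤ : ℕ∞) f ∧ ∀ p : ℝ × ℝ × ℝ,
      dT (vort f) p + poissonBracket f (vort f) p
        = K (p.2.1 ^ 2 + p.2.2 ^ 2) * vort (vort f) p := by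
  simp only [IsKVortSol, poissonBracket, add_sub_assoc, vort]

end PoissonBracket

section SolidRotation

/-- The stream function `ω/2 (x² + y²)` of a solid-body rotation with angular velocity `ω`. -/
def solidRotation (ω : ℝ) (p : ℝ × ℝ × ℝ) : ℝ :=
  ω / 2 * (p.2.1 ^ 2 + p.2.2 ^ 2)

lemma contDiff_solidRotation (ω : ℝ) {n : WithTop ℕ∞} : ContDiff ℝ n (solidRotation ω) := by
  unfold solidRotation
  fun_prop

lemma fderiv_solidRotation_apply (ω : ℝ) (p v : ℝ × ℝ × ℝ) :
    fderiv ℝ (solidRotation ω) p v = ω * (p.2.1 * v.2.1 + p.2.2 * v.2.2) := by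
  have h : HasFDerivAt (solidRotation ω) _ p :=
    (((hasFDerivAt_x p).pow 2).add ((hasFDerivAt_y p).pow 2)).const_mul (ω / 2)
  rw [h.fderiv]
  simp only [Nat.add_one_sub_one, pow_one, nsmul_eq_mul, Nat.cast_ofNat, smul_eq_mul, add_apply,
    smul_apply, ContinuousLinearMap.comp_apply, ContinuousLinearMap.coe_fst',
    ContinuousLinearMap.coe_snd']
  ring

lemma dX_solidRotation (ω : ℝ) : dX (solidRotation ω) = fun p => ω * p.2.1 := by
  funext p
  simp [dX, fderiv_solidRotation_apply]

lemma dY_solidRotation (ω : ℝ) : dY (solidRotation ω) = fun p => ω * p.2.2 := by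
  funext p
  simp [dY, fderiv_solidRotation_apply]

lemma vort_solidRotation (ω : ℝ) : vort (solidRotation ω) = fun _ => 2 * ω := by
  funext p
  rw [vort, dX_solidRotation, dY_solidRotation, dX, dY,
    ((hasFDerivAt_x p).const_mul ω).fderiv, ((hasFDerivAt_y p).const_mul ω).fderiv]
  simp [two_mul]

lemma poissonBracket_solidRotation (ω : ℝ) (g : ℝ × ℝ × ℝ → ℝ) (p : ℝ × ℝ × ℝ) :
    poissonBracket (solidRotation ω) g p = ω * angularDeriv g p := by
  simp only [poissonBracket, angularDeriv, dX_solidRotation, dY_solidRotation]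
  ring

end SolidRotation

section RotatingFrame

open Real

variable {θ : ℝ → ℝ} {f g : ℝ × ℝ × ℝ → ℝ} {p : ℝ × ℝ × ℝ}

/-- The passage to coordinates in a frame turned by the time-dependent angle `θ t`: the point
`(x, y)` is rotated clockwise by `θ t`, and time is kept. -/
def rotatingFrame (θ : ℝ → ℝ) (p : ℝ × ℝ × ℝ) : ℝ × ℝ × ℝ :=
  (p.1, p.2.1 * cos (θ p.1) + p.2.2 * sin (θ p.1), -p.2.1 * sin (θ p.1) + p.2.2 * cos (θ p.1))

lemma contDiff_rotatingFrame {n : WithTop ℕ∞} (hθ : ContDiff ℝ n θ) :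
    ContDiff ℝ n (rotatingFrame θ) := by
  unfold rotatingFrame
  fun_prop

lemma differentiableAt_rotatingFrame (hθ : DifferentiableAt ℝ θ p.1) :
    DifferentiableAt ℝ (rotatingFrame θ) p := by
  unfold rotatingFrame
  fun_prop

lemma rotatingFrame_radius_sq (θ : ℝ → ℝ) (p : ℝ × ℝ × ℝ) :
    (rotatingFrame θ p).2.1 ^ 2 + (rotatingFrame θ p).2.2 ^ 2 = p.2.1 ^ 2 + p.2.2 ^ 2 := by
  simp only [rotatingFrame]
  linear_combination (p.2.1 ^ 2 + p.2.2 ^ 2) * sin_sq_add_cos_sq (θ p.1)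

lemma fderiv_rotatingFrame_apply (hθ : DifferentiableAt ℝ θ p.1) (v : ℝ × ℝ × ℝ) :
    fderiv ℝ (rotatingFrame θ) p v =
      (v.1,
        v.2.1 * cos (θ p.1) + v.2.2 * sin (θ p.1)
          + v.1 * deriv θ p.1 * (rotatingFrame θ p).2.2,
        -v.2.1 * sin (θ p.1) + v.2.2 * cos (θ p.1)
          - v.1 * deriv θ p.1 * (rotatingFrame θ p).2.1) := by
  have ht := hasFDerivAt_comp_time hθ
  have h : HasFDerivAt (rotatingFrame θ) _ p := hasFDerivAt_fst.prodMk
    ((((hasFDerivAt_x p).mul ht.cos).add ((hasFDerivAt_y p).mul ht.sin)).prodMk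
      (((hasFDerivAt_x p).neg.mul ht.sin).add ((hasFDerivAt_y p).mul ht.cos)))
  rw [h.fderiv]
  ext <;>
    simp only [ContinuousLinearMap.prod_apply, ContinuousLinearMap.comp_apply,
      ContinuousLinearMap.coe_fst', ContinuousLinearMap.coe_snd', add_apply, neg_apply, smul_apply,
      smul_eq_mul, Pi.neg_apply, rotatingFrame] <;>
    ring

lemma fderiv_comp_rotatingFrame_apply (hf : DifferentiableAt ℝ f (rotatingFrame θ p))
    (hθ : DifferentiableAt ℝ θ p.1) (v : ℝ × ℝ × ℝ) :
    fderiv ℝ (f ∘ rotatingFrame θ) p v =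
      fderiv ℝ f (rotatingFrame θ p) (fderiv ℝ (rotatingFrame θ) p v) := by
  rw [fderiv_comp p hf (differentiableAt_rotatingFrame hθ), ContinuousLinearMap.comp_apply]

lemma dT_comp_rotatingFrame (hf : DifferentiableAt ℝ f (rotatingFrame θ p))
    (hθ : DifferentiableAt ℝ θ p.1) :
    dT (f ∘ rotatingFrame θ) p =
      dT f (rotatingFrame θ p) - deriv θ p.1 * angularDeriv f (rotatingFrame θ p) := by
  rw [dT, fderiv_comp_rotatingFrame_apply hf hθ, fderiv_rotatingFrame_apply hθ,
    fderiv_apply_eq_partials, angularDeriv]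
  ring

lemma dX_comp_rotatingFrame (hf : DifferentiableAt ℝ f (rotatingFrame θ p))
    (hθ : DifferentiableAt ℝ θ p.1) :
    dX (f ∘ rotatingFrame θ) p =
      cos (θ p.1) * dX f (rotatingFrame θ p) - sin (θ p.1) * dY f (rotatingFrame θ p) := by
  rw [dX, fderiv_comp_rotatingFrame_apply hf hθ, fderiv_rotatingFrame_apply hθ,
    fderiv_apply_eq_partials]
  ring

lemma dY_comp_rotatingFrame (hf : DifferentiableAt ℝ f (rotatingFrame θ p))
    (hθ : DifferentiableAt ℝ θ p.1) :
    dY (f ∘ rotatingFrame θ) p =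
      sin (θ p.1) * dX f (rotatingFrame θ p) + cos (θ p.1) * dY f (rotatingFrame θ p) := by
  rw [dY, fderiv_comp_rotatingFrame_apply hf hθ, fderiv_rotatingFrame_apply hθ,
    fderiv_apply_eq_partials]
  ring

lemma poissonBracket_comp_rotatingFrame (hf : DifferentiableAt ℝ f (rotatingFrame θ p))
    (hg : DifferentiableAt ℝ g (rotatingFrame θ p)) (hθ : DifferentiableAt ℝ θ p.1) :
    poissonBracket (f ∘ rotatingFrame θ) (g ∘ rotatingFrame θ) p =
      poissonBracket f g (rotatingFrame θ p) := by
  simp only [poissonBracket, dX_comp_rotatingFrame hf hθ, dY_comp_rotatingFrame hf hθ,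
    dX_comp_rotatingFrame hg hθ, dY_comp_rotatingFrame hg hθ]
  linear_combination (dX f (rotatingFrame θ p) * dY g (rotatingFrame θ p)
    - dY f (rotatingFrame θ p) * dX g (rotatingFrame θ p)) * sin_sq_add_cos_sq (θ p.1)

lemma angularDeriv_comp_rotatingFrame (hf : DifferentiableAt ℝ f (rotatingFrame θ p))
    (hθ : DifferentiableAt ℝ θ p.1) :
    angularDeriv (f ∘ rotatingFrame θ) p = angularDeriv f (rotatingFrame θ p) := by
  simp only [angularDeriv, dX_comp_rotatingFrame hf hθ, dY_comp_rotatingFrame hf hθ, rotatingFrame]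
  ring

lemma dX_dX_comp_rotatingFrame (hf : ContDiff ℝ 2 f) (hθ : Differentiable ℝ θ)
    (p : ℝ × ℝ × ℝ) :
    dX (dX (f ∘ rotatingFrame θ)) p =
      cos (θ p.1) * dX (dX f ∘ rotatingFrame θ) p
        + -sin (θ p.1) * dX (dY f ∘ rotatingFrame θ) p := by
  have h : dX (f ∘ rotatingFrame θ) = fun q =>
      cos (θ q.1) * (dX f ∘ rotatingFrame θ) q + -sin (θ q.1) * (dY f ∘ rotatingFrame θ) q := by
    funext q
    rw [dX_comp_rotatingFrame (hf.differentiable two_ne_zero _) (hθ _), sub_eq_add_neg, neg_mul]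
    rfl
  rw [h]
  exact fderiv_time_mul_add_time_mul_apply_spatial (hθ p.1).cos (hθ p.1).sin.fun_neg
    ((differentiable_dX hf _).comp p (differentiableAt_rotatingFrame (hθ p.1)))
    ((differentiable_dY hf _).comp p (differentiableAt_rotatingFrame (hθ p.1))) (1, 0)

lemma dY_dY_comp_rotatingFrame (hf : ContDiff ℝ 2 f) (hθ : Differentiable ℝ θ)
    (p : ℝ × ℝ × ℝ) :
    dY (dY (f ∘ rotatingFrame θ)) p =
      sin (θ p.1) * dY (dX f ∘ rotatingFrame θ) p
        + cos (θ p.1) * dY (dY f ∘ rotatingFrame θ) p := by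
  have h : dY (f ∘ rotatingFrame θ) = fun q =>
      sin (θ q.1) * (dX f ∘ rotatingFrame θ) q + cos (θ q.1) * (dY f ∘ rotatingFrame θ) q :=
    funext fun q => dY_comp_rotatingFrame (hf.differentiable two_ne_zero _) (hθ _)
  rw [h]
  exact fderiv_time_mul_add_time_mul_apply_spatial (hθ p.1).sin (hθ p.1).cos
    ((differentiable_dX hf _).comp p (differentiableAt_rotatingFrame (hθ p.1)))
    ((differentiable_dY hf _).comp p (differentiableAt_rotatingFrame (hθ p.1))) (0, 1)

lemma vort_comp_rotatingFrame (hf : ContDiff ℝ 2 f) (hθ : Differentiable ℝ θ) :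
    vort (f ∘ rotatingFrame θ) = vort f ∘ rotatingFrame θ := by
  funext p
  have hX := differentiable_dX hf (rotatingFrame θ p)
  have hY := differentiable_dY hf (rotatingFrame θ p)
  simp only [vort, Function.comp_apply, dX_dX_comp_rotatingFrame hf hθ,
    dY_dY_comp_rotatingFrame hf hθ, dX_comp_rotatingFrame hX (hθ _),
    dX_comp_rotatingFrame hY (hθ _), dY_comp_rotatingFrame hX (hθ _),
    dY_comp_rotatingFrame hY (hθ _)]
  linear_combination (dX (dX f) (rotatingFrame θ p) + dY (dY f) (rotatingFrame θ p))
    * sin_sq_add_cos_sq (θ p.1)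

lemma vort_comp_rotatingFrame_add_solidRotation (hf : ContDiff ℝ 2 f) (hθ : ContDiff ℝ 2 θ)
    (ω : ℝ) :
    vort (f ∘ rotatingFrame θ + solidRotation ω) =
      fun q => (vort f ∘ rotatingFrame θ) q + 2 * ω := by
  rw [vort_add (hf.comp (contDiff_rotatingFrame hθ)) (contDiff_solidRotation ω),
    vort_comp_rotatingFrame hf (hθ.differentiable two_ne_zero), vort_solidRotation]
  rfl

lemma dT_add_poissonBracket_comp_rotatingFrame (hf : DifferentiableAt ℝ f (rotatingFrame θ p))
    (hg : DifferentiableAt ℝ g (rotatingFrame θ p)) {ω : ℝ} (hθ : HasDerivAt θ ω p.1) :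
    dT (g ∘ rotatingFrame θ) p
        + poissonBracket (f ∘ rotatingFrame θ + solidRotation ω) (g ∘ rotatingFrame θ) p =
      dT g (rotatingFrame θ p) + poissonBracket f g (rotatingFrame θ p) := by
  have hθ' := hθ.differentiableAt
  rw [poissonBracket_add_left (hf.comp p (differentiableAt_rotatingFrame hθ'))
      ((contDiff_solidRotation ω).differentiable one_ne_zero p),
    dT_comp_rotatingFrame hg hθ', hθ.deriv, poissonBracket_comp_rotatingFrame hf hg hθ',
    poissonBracket_solidRotation, angularDeriv_comp_rotatingFrame hg hθ']
  ring

end RotatingFrame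

theorem Jt_symmetry_of_rotationally_invariant_parameterization_general
    (K : ℝ → ℝ) (ψ : ℝ × ℝ × ℝ → ℝ) (h : IsKVortSol K ψ) (ε : ℝ) :
    IsKVortSol K (fun p =>
      ψ (p.1, p.2.1 * Real.cos (ε * p.1) + p.2.2 * Real.sin (ε * p.1),
         -p.2.1 * Real.sin (ε * p.1) + p.2.2 * Real.cos (ε * p.1))
      + ε / 2 * (p.2.1 ^ 2 + p.2.2 ^ 2)) := by
  obtain ⟨hψ, heq⟩ := isKVortSol_iff.mp h
  have hψ₂ : ContDiff ℝ 2 ψ := contDiff_infty.mp hψ 2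
  have hζ : ContDiff ℝ (⊤ : ℕ∞) (vort ψ) := contDiff_vort hψ le_rfl
  have hζ₂ : ContDiff ℝ 2 (vort ψ) := contDiff_infty.mp hζ 2
  have hθ (t : ℝ) : HasDerivAt (ε * ·) ε t := hasDerivAt_const_mul ε
  change IsKVortSol K (ψ ∘ rotatingFrame (ε * ·) + solidRotation ε)
  refine isKVortSol_iff.mpr ⟨?_, fun p => ?_⟩
  · exact (hψ.comp (contDiff_rotatingFrame (by fun_prop))).add (contDiff_solidRotation ε)
  · rw [vort_comp_rotatingFrame_add_solidRotation hψ₂ (by fun_prop), dT_add_const,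
      poissonBracket_add_const_right, vort_add_const,
      vort_comp_rotatingFrame hζ₂ fun t => (hθ t).differentiableAt,
      dT_add_poissonBracket_comp_rotatingFrame (hψ₂.differentiable two_ne_zero _)
        (hζ₂.differentiable two_ne_zero _) (hθ p.1),
      heq, rotatingFrame_radius_sq, Function.comp_apply]

theorem Jt_symmetry_of_rotationally_invariant_parameterization
    (K : ℝ → ℝ) (hK : ContDiff ℝ (⊤ : ℕ∞) K)
    (ψ : ℝ × ℝ × ℝ → ℝ) (h : IsKVortSol K ψ) (ε : ℝ) :
    IsKVortSol K (fun p =>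
      ψ (p.1, p.2.1 * Real.cos (ε * p.1) + p.2.2 * Real.sin (ε * p.1),
         -p.2.1 * Real.sin (ε * p.1) + p.2.2 * Real.cos (ε * p.1))
      + ε / 2 * (p.2.1 ^ 2 + p.2.2 ^ 2)) :=
  Jt_symmetry_of_rotationally_invariant_parameterization_general K ψ h ε
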